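/- Let X_N = (Z_N + Z_N*)/√2 where Z_N is an N×N matrix with i.i.d. standard complex Gaussian entries scaled by 1/√N. Then for every k ≥ 0, lim_{N→∞} E[(1/N)Tr(X_N^k)] equals the k-th moment of the standard semicircle law: C_{k/2} if k is even and 0 if k is odd. -/

import Mathlib

open MeasureTheory ProbabilityTheory Complex Matrix Filter

/-- The entrywise distribution of an `N × N` matrix of i.i.d. standard complex Gaussians. -/
noncomputable def gaussMatrixMeasure (N : ℕ) : Measure (Fin N → Fin N → ℝ × ℝ) :=
  Measure.pi fun _ => Measure.pi fun _ =>
    (gaussianReal 0 (1 / 2)).prod (gaussianReal 0 (1 / 2))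

/-- The Gaussian random matrix `Z_N` with entries `z_{ij}/√N`. -/
noncomputable def gaussMatrix {N : ℕ} (ω : Fin N → Fin N → ℝ × ℝ) :
    Matrix (Fin N) (Fin N) ℂ :=
  Matrix.of fun i j => (((ω i j).1 : ℂ) + ((ω i j).2 : ℂ) * I) / (Real.sqrt N : ℂ)

/-- The GUE-type Wigner matrix `X_N = (Z_N + Z_N*)/√2`. -/
noncomputable def wignerMatrix {N : ℕ} (ω : Fin N → Fin N → ℝ × ℝ) :
    Matrix (Fin N) (Fin N) ℂ :=
  ((Real.sqrt 2 : ℂ))⁻¹ • (gaussMatrix ω + (gaussMatrix ω)ᴴ)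

open Finset.HasAntidiagonal (antidiagonal)
open scoped NNReal

/-- The `k`-th moment of the standard semicircle law. -/
noncomputable def semicircleMoment (k : ℕ) : ℂ :=
  if Even k then ((catalan (k / 2) : ℕ) : ℂ) else 0

lemma semicircleMoment_add_two (n : ℕ) :
    semicircleMoment (n + 2) =
      ∑ p ∈ antidiagonal n, semicircleMoment p.1 * semicircleMoment p.2 := by
  rcases Nat.even_or_odd' n with ⟨m, rfl | rfl⟩
  · have hm : (2 * m + 2) / 2 = m + 1 := by omega
    rw [semicircleMoment, if_pos (by simp [parity_simps]), hm, catalan_succ']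
    push_cast
    refine Finset.sum_of_injOn (fun p => (2 * p.1, 2 * p.2)) ?_ ?_ ?_ ?_
    · rintro ⟨a, b⟩ - ⟨c, d⟩ - h
      simpa using h
    · rintro ⟨a, b⟩ h
      simp only [Finset.mem_coe,
        Finset.HasAntidiagonal.mem_antidiagonal] at h ⊢
      omega
    · rintro ⟨a, b⟩ h hn
      simp only [Finset.HasAntidiagonal.mem_antidiagonal] at h
      by_cases ha : Even a
      · obtain ⟨c, rfl⟩ := ha
        refine absurd ⟨(c, m - c), ?_, ?_⟩ hn
        · simp only [Finset.mem_coe,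
            Finset.HasAntidiagonal.mem_antidiagonal]
          omega
        · simp only [Prod.mk.injEq]
          omega
      · simp [semicircleMoment, ha]
    · rintro ⟨a, b⟩ -
      simp [semicircleMoment]
  · rw [semicircleMoment, if_neg (by simp [parity_simps])]
    refine (Finset.sum_eq_zero ?_).symm
    rintro ⟨a, b⟩ h
    simp only [Finset.HasAntidiagonal.mem_antidiagonal] at h
    by_cases ha : Even a
    · have hb : ¬ Even b := by
        intro hb
        have := ha.add hb
        rw [h] at this
        simp [parity_simps] at this
      simp [semicircleMoment, hb]
    · simp [semicircleMoment, ha]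

lemma semicircleMoment_zero : semicircleMoment 0 = 1 := by simp [semicircleMoment]

lemma semicircleMoment_one : semicircleMoment 1 = 0 := by simp [semicircleMoment]

/-- A family of mixed moments satisfying the loop equations of the Gaussian unitary ensemble
factorizes asymptotically into moments of the semicircle law. -/
lemma tendsto_of_loop_equations (M : ℕ → List ℕ → ℂ) (R : ℕ → ℕ → List ℕ → List ℕ → ℂ)
    (M_nil : ∀ N ≠ 0, M N [] = 1)
    (M_zero : ∀ N ≠ 0, ∀ l, M N (0 :: l) = M N l)
    (M_one : ∀ N ≠ 0, ∀ l, M N (1 :: l) = ((N : ℂ) ^ 2)⁻¹ * R N 0 [] l)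
    (M_add_two : ∀ N ≠ 0, ∀ n l, M N ((n + 2) :: l) =
      ∑ p ∈ antidiagonal n, M N (p.1 :: p.2 :: l) +
        ((N : ℂ) ^ 2)⁻¹ * R N (n + 1) [] l)
    (R_nil : ∀ N ≠ 0, ∀ n p, R N n p [] = 0)
    (R_cons : ∀ N ≠ 0, ∀ n p k l, R N n p (k :: l) =
      k * M N ((n + k - 1) :: (p ++ l)) + R N n (k :: p) l) (l : List ℕ) :
    Tendsto (fun N => M N l) atTop (nhds (l.map semicircleMoment).prod) := by
  have hN : ∀ᶠ N : ℕ in atTop, N ≠ 0 := eventually_ne_atTop 0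
  have hinv : Tendsto (fun N : ℕ => ((N : ℂ) ^ 2)⁻¹) atTop (nhds 0) := by
    have := (tendsto_inv_atTop_nhds_zero_nat (𝕜 := ℂ)).pow 2
    simpa using this
  suffices H : ∀ d : ℕ, ∀ l : List ℕ, l.sum = d →
      Tendsto (fun N => M N l) atTop (nhds (l.map semicircleMoment).prod) from H _ l rfl
  intro d
  induction d using Nat.strong_induction_on with
  | _ d ih =>
    have hR : ∀ l p : List ℕ, ∀ n, n + p.sum + l.sum < d →
        Tendsto (fun N : ℕ => ((N : ℂ) ^ 2)⁻¹ * R N n p l) atTop (nhds 0) := by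
      intro l
      induction l with
      | nil =>
        intro p n _
        refine tendsto_const_nhds.congr' ?_
        filter_upwards [hN] with N h
        simp [R_nil N h]
      | cons k l ihl =>
        intro p n hd
        simp only [List.sum_cons] at hd
        have h1 := ihl (k :: p) n (by simp only [List.sum_cons]; omega)
        have h2 : Tendsto (fun N : ℕ => ((N : ℂ) ^ 2)⁻¹ *
            (k * M N ((n + k - 1) :: (p ++ l)))) atTop (nhds 0) := by
          have h3 := ih _ (by simp only [List.sum_append, List.sum_cons]; omega)
            ((n + k - 1) :: (p ++ l)) rfl
          simpa using hinv.mul (h3.const_mul (k : ℂ))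
        have h4 := h2.add h1
        rw [add_zero] at h4
        refine h4.congr' ?_
        filter_upwards [hN] with N h
        rw [R_cons N h]
        ring
    intro l
    induction l with
    | nil =>
      intro _
      refine tendsto_const_nhds.congr' ?_
      filter_upwards [hN] with N h
      simp [M_nil N h]
    | cons k l ihl =>
      intro hd
      simp only [List.sum_cons] at hd
      rcases k with _ | _ | n
      · have h1 := ihl (by omega)
        simp only [List.map_cons, List.prod_cons, semicircleMoment_zero, one_mul]
        refine h1.congr' ?_
        filter_upwards [hN] with N h
        rw [M_zero N h]
      · have h1 := hR l [] 0 (by simp only [List.sum_nil]; omega)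
        simp only [zero_add, List.map_cons, List.prod_cons, semicircleMoment_one, zero_mul]
        refine h1.congr' ?_
        filter_upwards [hN] with N h
        rw [M_one N h]
      · have h1 := hR l [] (n + 1) (by simp only [List.sum_nil]; omega)
        have h2 : Tendsto (fun N => ∑ p ∈ antidiagonal n, M N (p.1 :: p.2 :: l)) atTop
            (nhds (∑ p ∈ antidiagonal n,
              ((p.1 :: p.2 :: l).map semicircleMoment).prod)) := by
          refine tendsto_finsetSum _ fun p hp => ?_
          have hp' := Finset.HasAntidiagonal.mem_antidiagonal.mp hp
          exact ih _ (by simp only [List.sum_cons]; omega) _ rfl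
        have h3 := h2.add h1
        rw [add_zero] at h3
        simp only [List.map_cons, List.prod_cons, ← mul_assoc, ← Finset.sum_mul] at h3
        simp only [List.map_cons, List.prod_cons]
        rw [add_assoc, one_add_one_eq_two, semicircleMoment_add_two]
        refine h3.congr' ?_
        filter_upwards [hN] with N h
        rw [M_add_two N h]

section LoopEquations

variable {n A : Type*} [Fintype n] [DecidableEq n] [CommRing A] [Algebra ℂ A]
  {X : Matrix n n A} {D : n → n → Derivation ℂ A A}

lemma derivation_matrix_pow_succ_apply
    (hD : ∀ i j k l, D i j (X k l) = (1 : Matrix n n A) k j * (1 : Matrix n n A) i l)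
    (i j : n) (m : ℕ) (k l : n) :
    D i j ((X ^ (m + 1)) k l) =
      ∑ p ∈ antidiagonal m, (X ^ p.1) k j * (X ^ p.2) i l := by
  induction m generalizing k l with
  | zero => simp [hD]
  | succ m ih =>
    rw [Finset.Nat.sum_antidiagonal_succ', pow_succ X (m + 1), mul_apply, map_sum]
    simp only [Derivation.leibniz, ih, hD, smul_eq_mul, Finset.sum_add_distrib, pow_zero]
    congr 1
    · simp only [← mul_assoc, ← Finset.sum_mul, ← mul_apply, mul_one]
    · simp only [pow_succ X _, Finset.mul_sum, mul_apply (N := X)]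
      rw [Finset.sum_comm]
      refine Finset.sum_congr rfl fun p _ => Finset.sum_congr rfl fun r _ => ?_
      ring

lemma derivation_trace_pow
    (hD : ∀ i j k l, D i j (X k l) = (1 : Matrix n n A) k j * (1 : Matrix n n A) i l)
    (i j : n) (m : ℕ) :
    D i j ((X ^ m).trace) = m * (X ^ (m - 1)) i j := by
  rcases m with _ | m
  · rw [pow_zero, trace_one]
    simp
  · simp only [trace, diag_apply, map_sum, derivation_matrix_pow_succ_apply hD]
    rw [Finset.sum_comm]
    have : ∀ p ∈ antidiagonal m, ∑ r, (X ^ p.1) r j * (X ^ p.2) i r = (X ^ m) i j := by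
      intro p hp
      rw [← Finset.HasAntidiagonal.mem_antidiagonal.mp hp, add_comm, pow_add, mul_apply]
      exact Finset.sum_congr rfl fun r _ => mul_comm _ _
    rw [Finset.sum_congr rfl this]
    simp

variable (X) in
/-- The product of the normalized traces of the powers of `X` with exponents in `l`. -/
noncomputable def tracePowProd (l : List ℕ) : A :=
  (l.map fun k => ((Fintype.card n : ℂ)⁻¹) • (X ^ k).trace).prod

lemma tracePowProd_cons (k : ℕ) (l : List ℕ) :
    tracePowProd X (k :: l) = ((Fintype.card n : ℂ)⁻¹ • (X ^ k).trace) * tracePowProd X l := by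
  simp [tracePowProd]

lemma tracePowProd_append (l l' : List ℕ) :
    tracePowProd X (l ++ l') = tracePowProd X l * tracePowProd X l' := by
  simp [tracePowProd]

lemma tracePowProd_zero_cons [Nonempty n] (l : List ℕ) :
    tracePowProd X (0 :: l) = tracePowProd X l := by
  have h : (Fintype.card n : A) = (Fintype.card n : ℂ) • (1 : A) := by
    rw [← Algebra.algebraMap_eq_smul_one, map_natCast]
  rw [tracePowProd_cons, pow_zero, trace_one, h, smul_smul, inv_mul_cancel₀ (by simp),
    one_smul, one_mul]

variable (X D) in
/-- The contraction of `X ^ m` with the derivative of the product of traces over `l`. -/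
noncomputable def traceContraction (m : ℕ) (l : List ℕ) : A :=
  ∑ i, ∑ j, (X ^ m) j i * D i j (tracePowProd X l)

lemma traceContraction_nil (m : ℕ) : traceContraction X D m [] = 0 := by
  simp [traceContraction, tracePowProd]

lemma traceContraction_cons
    (hD : ∀ i j k l, D i j (X k l) = (1 : Matrix n n A) k j * (1 : Matrix n n A) i l)
    (m k : ℕ) (l : List ℕ) :
    traceContraction X D m (k :: l) =
      (k : ℂ) • tracePowProd X ((m + k - 1) :: l) +
        ((Fintype.card n : ℂ)⁻¹ • (X ^ k).trace) * traceContraction X D m l := by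
  simp only [traceContraction, tracePowProd_cons, Derivation.leibniz, smul_eq_mul,
    Derivation.map_smul, derivation_trace_pow hD, mul_add, Finset.sum_add_distrib]
  rw [add_comm]
  congr 1
  · rcases k with _ | k
    · simp
    · have h : (X ^ (m + (k + 1) - 1)).trace = ∑ i, ∑ j, (X ^ m) j i * (X ^ k) i j := by
        rw [show m + (k + 1) - 1 = m + k by omega, pow_add, trace]
        simp only [diag_apply, mul_apply]
        rw [Finset.sum_comm]
      rw [h]
      simp only [Finset.sum_mul, Algebra.smul_def, map_natCast, Finset.mul_sum,
        add_tsub_cancel_right]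
      refine Finset.sum_congr rfl fun i _ => Finset.sum_congr rfl fun j _ => ?_
      ring
  · simp only [Finset.mul_sum]
    refine Finset.sum_congr rfl fun i _ => Finset.sum_congr rfl fun j _ => ?_
    ring

variable {E : A →ₗ[ℂ] ℂ}

lemma tracePowProd_succ_cons_eq
    (hE : ∀ i j a, E (X i j * a) = (Fintype.card n : ℂ)⁻¹ * E (D i j a))
    (m : ℕ) (l : List ℕ) :
    E (tracePowProd X ((m + 1) :: l)) =
      ((Fintype.card n : ℂ) ^ 2)⁻¹ * E (∑ i, ∑ j, D i j ((X ^ m) j i) * tracePowProd X l) +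
      ((Fintype.card n : ℂ) ^ 2)⁻¹ * E (traceContraction X D m l) := by
  have h : tracePowProd X ((m + 1) :: l) = (Fintype.card n : ℂ)⁻¹ •
      ∑ i, ∑ j, X i j * ((X ^ m) j i * tracePowProd X l) := by
    rw [tracePowProd_cons, smul_mul_assoc, pow_succ', trace]
    simp only [diag_apply, mul_apply, Finset.sum_mul, mul_assoc]
  rw [h, map_smul, ← mul_add, ← map_add, traceContraction, ← Finset.sum_add_distrib]
  simp only [map_sum, hE, ← Finset.sum_add_distrib, Derivation.leibniz, smul_eq_mul]
  simp only [← Finset.mul_sum]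
  rw [← mul_assoc, sq, mul_inv]
  congr 1
  refine Finset.sum_congr rfl fun i _ => Finset.sum_congr rfl fun j _ => ?_
  rw [add_comm, mul_comm (tracePowProd X l)]

lemma tracePowProd_one_cons
    (hE : ∀ i j a, E (X i j * a) = (Fintype.card n : ℂ)⁻¹ * E (D i j a)) (l : List ℕ) :
    E (tracePowProd X (1 :: l)) =
      ((Fintype.card n : ℂ) ^ 2)⁻¹ * E (traceContraction X D 0 l) := by
  have h : ∀ i j, D i j ((1 : Matrix n n A) j i) = 0 := by
    intro i j
    rw [one_apply]
    split_ifs <;> simp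
  rw [← zero_add 1, tracePowProd_succ_cons_eq hE]
  simp [h]

lemma tracePowProd_add_two_cons
    (hD : ∀ i j k l, D i j (X k l) = (1 : Matrix n n A) k j * (1 : Matrix n n A) i l)
    (hE : ∀ i j a, E (X i j * a) = (Fintype.card n : ℂ)⁻¹ * E (D i j a))
    (m : ℕ) (l : List ℕ) :
    E (tracePowProd X ((m + 2) :: l)) =
      ∑ p ∈ antidiagonal m, E (tracePowProd X (p.1 :: p.2 :: l)) +
        ((Fintype.card n : ℂ) ^ 2)⁻¹ * E (traceContraction X D (m + 1) l) := by
  rw [← one_add_one_eq_two, ← add_assoc, tracePowProd_succ_cons_eq hE, ← smul_eq_mul,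
    ← map_smul, ← map_sum]
  congr 2
  have h : ∑ i, ∑ j, D i j ((X ^ (m + 1)) j i) =
      ∑ p ∈ antidiagonal m, (X ^ p.1).trace * (X ^ p.2).trace := by
    simp only [derivation_matrix_pow_succ_apply hD, trace, diag_apply, Finset.sum_mul_sum]
    rw [Finset.sum_congr rfl fun i _ => Finset.sum_comm, Finset.sum_comm]
    exact Finset.sum_congr rfl fun p _ => Finset.sum_comm
  simp only [← Finset.sum_mul, h, tracePowProd_cons]
  rw [Finset.sum_mul, Finset.smul_sum]
  refine Finset.sum_congr rfl fun p _ => ?_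
  simp only [smul_mul_assoc, mul_smul_comm, smul_smul, sq, mul_inv, mul_assoc]

end LoopEquations

section GaussianMoments

lemma integrable_pow_gaussianReal (μ : ℝ) (v : ℝ≥0) (n : ℕ) :
    Integrable (fun x : ℝ => x ^ n) (gaussianReal μ v) := by
  have h := (memLp_id_gaussianReal (μ := μ) (v := v) n).integrable_norm_pow'
  refine h.mono' (by fun_prop) (ae_of_all _ fun x => ?_)
  simp

lemma hasDerivAt_gaussianPDFReal_zero (v : ℝ≥0) (hv : v ≠ 0) (x : ℝ) :
    HasDerivAt (gaussianPDFReal 0 v) (-(x / v) * gaussianPDFReal 0 v x) x := by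
  have hv' : (v : ℝ) ≠ 0 := by exact_mod_cast hv
  have h : HasDerivAt (fun x : ℝ => -(x - 0) ^ 2 / (2 * v)) (-(x / v)) x := by
    have := ((((hasDerivAt_id x).sub_const 0).pow 2).neg).div_const (2 * (v : ℝ))
    convert! this using 1
    simp
    field_simp
  have := (h.exp).const_mul ((√(2 * Real.pi * v))⁻¹)
  rw [gaussianPDFReal_def]
  convert! this using 1
  ring

lemma integral_pow_succ_gaussianReal (v : ℝ≥0) (n : ℕ) :
    ∫ x, x ^ (n + 1) ∂(gaussianReal 0 v) = n * v * ∫ x, x ^ (n - 1) ∂(gaussianReal 0 v) := by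
  rcases eq_or_ne v 0 with rfl | hv
  · simp
  have hv' : (v : ℝ) ≠ 0 := by exact_mod_cast hv
  have hint : ∀ m : ℕ, Integrable fun x : ℝ => x ^ m * gaussianPDFReal 0 v x := by
    intro m
    have h := integrable_pow_gaussianReal 0 v m
    rw [gaussianReal_of_var_ne_zero _ hv, integrable_withDensity_iff (measurable_gaussianPDF _ _)
      (ae_of_all _ fun _ => gaussianPDF_lt_top)] at h
    simpa using h
  have key := integral_mul_deriv_eq_deriv_mul_of_integrable (u := fun x : ℝ => x ^ n)
    (u' := fun x => n * x ^ (n - 1)) (v := gaussianPDFReal 0 v)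
    (v' := fun x => -(x / v) * gaussianPDFReal 0 v x)
    (fun x _ => hasDerivAt_pow n x) (fun x _ => hasDerivAt_gaussianPDFReal_zero v hv x)
    (((hint (n + 1)).const_mul (-(v : ℝ)⁻¹)).congr (ae_of_all _ fun x => by
      simp only [Pi.mul_apply]; field_simp; ring))
    (((hint (n - 1)).const_mul (n : ℝ)).congr (ae_of_all _ fun x => by
      simp only [Pi.mul_apply]; ring))
    (hint n)
  have h1 : ∀ x : ℝ, x ^ n * (-(x / v) * gaussianPDFReal 0 v x) =
      -(v : ℝ)⁻¹ * (gaussianPDFReal 0 v x * x ^ (n + 1)) := fun x => by field_simp; ring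
  have h2 : ∀ x : ℝ, n * x ^ (n - 1) * gaussianPDFReal 0 v x =
      n * (gaussianPDFReal 0 v x * x ^ (n - 1)) := fun x => by ring
  simp only [h1, h2, integral_const_mul] at key
  simp only [integral_gaussianReal_eq_integral_smul hv, smul_eq_mul]
  field_simp at key
  linear_combination -key

end GaussianMoments

section GaussianPolynomials

variable {N : ℕ}

/-- The real coordinates of a complex matrix, indexed by position and real or imaginary part. -/
def entryCoord (ω : Fin N → Fin N → ℝ × ℝ) (s : Fin N × Fin N × Bool) : ℂ :=
  if s.2.2 then ((ω s.1 s.2.1).2 : ℂ) else ((ω s.1 s.2.1).1 : ℂ)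

instance : IsProbabilityMeasure (gaussMatrixMeasure N) := by
  unfold gaussMatrixMeasure
  infer_instance

lemma aeval_entryCoord_monomial (ω : Fin N → Fin N → ℝ × ℝ) (m : Fin N × Fin N × Bool →₀ ℕ)
    (a : ℂ) :
    MvPolynomial.aeval (entryCoord ω) (MvPolynomial.monomial m a) =
      a * ∏ i, ∏ j, (((ω i j).1 : ℂ) ^ m (i, j, false) * ((ω i j).2 : ℂ) ^ m (i, j, true)) := by
  rw [MvPolynomial.aeval_monomial, Finsupp.prod_fintype _ _ (by simp), Fintype.prod_prod_type]
  simp only [Fintype.prod_prod_type, Fintype.prod_bool, entryCoord]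
  simp [mul_comm]

lemma integrable_ofReal_pow_gaussianReal (v : ℝ≥0) (n : ℕ) :
    Integrable (fun x : ℝ => (x : ℂ) ^ n) (gaussianReal 0 v) := by
  simpa using (integrable_pow_gaussianReal 0 v n).ofReal (𝕜 := ℂ)

lemma integrable_aeval_entryCoord (p : MvPolynomial (Fin N × Fin N × Bool) ℂ) :
    Integrable (fun ω => MvPolynomial.aeval (entryCoord ω) p) (gaussMatrixMeasure N) := by
  induction p using MvPolynomial.induction_on' with
  | monomial m a =>
    simp only [aeval_entryCoord_monomial]
    refine Integrable.const_mul ?_ a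
    refine Integrable.fintype_prod (f := fun i (x : Fin N → ℝ × ℝ) => ∏ j,
      (((x j).1 : ℂ) ^ m (i, j, false) * ((x j).2 : ℂ) ^ m (i, j, true))) fun i => ?_
    refine Integrable.fintype_prod (f := fun j (x : ℝ × ℝ) =>
      ((x.1 : ℂ) ^ m (i, j, false) * (x.2 : ℂ) ^ m (i, j, true))) fun j => ?_
    exact (integrable_ofReal_pow_gaussianReal _ _).mul_prod
      (integrable_ofReal_pow_gaussianReal _ _)
  | add p q hp hq =>
    simp only [map_add]
    exact hp.add hq

variable (N) in
/-- The expectation of a polynomial in the real coordinates of a complex Gaussian matrix. -/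
noncomputable def gaussExpect : MvPolynomial (Fin N × Fin N × Bool) ℂ →ₗ[ℂ] ℂ where
  toFun p := ∫ ω, MvPolynomial.aeval (entryCoord ω) p ∂(gaussMatrixMeasure N)
  map_add' p q := by
    simp only [map_add]
    exact integral_add (integrable_aeval_entryCoord p) (integrable_aeval_entryCoord q)
  map_smul' c p := by
    simp only [map_smul, smul_eq_mul, RingHom.id_apply]
    exact integral_const_mul _ _

lemma gaussExpect_one : gaussExpect N 1 = 1 := by
  simp [gaussExpect]

lemma gaussExpect_monomial (m : Fin N × Fin N × Bool →₀ ℕ) (a : ℂ) :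
    gaussExpect N (MvPolynomial.monomial m a) =
      a * ∏ s, ((∫ x, x ^ m s ∂(gaussianReal 0 (1 / 2)) : ℝ) : ℂ) := by
  simp only [gaussExpect, LinearMap.coe_mk, AddHom.coe_mk, aeval_entryCoord_monomial,
    integral_const_mul]
  congr 1
  rw [gaussMatrixMeasure, integral_fintype_prod_eq_prod (f := fun i (x : Fin N → ℝ × ℝ) => ∏ j,
      (((x j).1 : ℂ) ^ m (i, j, false) * ((x j).2 : ℂ) ^ m (i, j, true))),
    Fintype.prod_prod_type]
  refine Finset.prod_congr rfl fun i _ => ?_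
  rw [integral_fintype_prod_eq_prod (f := fun j (x : ℝ × ℝ) =>
      ((x.1 : ℂ) ^ m (i, j, false) * (x.2 : ℂ) ^ m (i, j, true))),
    Fintype.prod_prod_type]
  refine Finset.prod_congr rfl fun j _ => ?_
  rw [integral_prod_mul (fun x : ℝ => (x : ℂ) ^ m (i, j, false))
    (fun x : ℝ => (x : ℂ) ^ m (i, j, true)), Fintype.prod_bool, mul_comm]
  simp only [← ofReal_pow, integral_complex_ofReal]

lemma gaussExpect_X_mul (s : Fin N × Fin N × Bool) (p : MvPolynomial (Fin N × Fin N × Bool) ℂ) :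
    gaussExpect N (MvPolynomial.X s * p) = 1 / 2 * gaussExpect N (MvPolynomial.pderiv s p) := by
  induction p using MvPolynomial.induction_on' with
  | monomial m a =>
    rw [MvPolynomial.pderiv_monomial, MvPolynomial.X, MvPolynomial.monomial_mul,
      gaussExpect_monomial, gaussExpect_monomial, Fintype.prod_eq_mul_prod_compl s,
      Fintype.prod_eq_mul_prod_compl s]
    have h : ∀ t ∈ ({s}ᶜ : Finset (Fin N × Fin N × Bool)),
        (Finsupp.single s 1 + m : _ →₀ ℕ) t = m t ∧
          (m - Finsupp.single s 1 : _ →₀ ℕ) t = m t := by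
      intro t ht
      have : s ≠ t := by
        rintro rfl
        simp at ht
      simp [this]
    have h' : ∏ t ∈ {s}ᶜ, ((∫ x, x ^ (Finsupp.single s 1 + m : _ →₀ ℕ) t
          ∂(gaussianReal 0 (1 / 2)) : ℝ) : ℂ) =
        ∏ t ∈ {s}ᶜ, ((∫ x, x ^ (m - Finsupp.single s 1 : _ →₀ ℕ) t
          ∂(gaussianReal 0 (1 / 2)) : ℝ) : ℂ) :=
      Finset.prod_congr rfl fun t ht => by rw [(h t ht).1, (h t ht).2]
    rw [h']
    rw [Finsupp.add_apply, Finsupp.tsub_apply, Finsupp.single_eq_same, add_comm 1,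
      integral_pow_succ_gaussianReal]
    push_cast
    ring
  | add p q hp hq => simp only [mul_add, map_add, hp, hq]

/-- The complex coordinate `z_{ij}` of a Gaussian matrix, as a polynomial in real coordinates. -/
noncomputable def entryPoly (i j : Fin N) : MvPolynomial (Fin N × Fin N × Bool) ℂ :=
  MvPolynomial.X (i, j, false) + I • MvPolynomial.X (i, j, true)

/-- The complex conjugate of `entryPoly`. -/
noncomputable def entryPolyConj (i j : Fin N) : MvPolynomial (Fin N × Fin N × Bool) ℂ :=
  MvPolynomial.X (i, j, false) - I • MvPolynomial.X (i, j, true)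

variable (N) in
/-- The Wigner matrix with entries regarded as polynomials in the real Gaussian coordinates. -/
noncomputable def wignerPoly : Matrix (Fin N) (Fin N) (MvPolynomial (Fin N × Fin N × Bool) ℂ) :=
  Matrix.of fun i j => ((√2 : ℂ)⁻¹ * (√N : ℂ)⁻¹) • (entryPoly i j + entryPolyConj j i)

/-- The derivation dual to the `(i, j)` entry of the Wigner matrix under Gaussian integration by
parts. -/
noncomputable def wignerDeriv (i j : Fin N) : Derivation ℂ
    (MvPolynomial (Fin N × Fin N × Bool) ℂ) (MvPolynomial (Fin N × Fin N × Bool) ℂ) :=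
  ((N : ℂ) * ((√2 : ℂ)⁻¹ * (√N : ℂ)⁻¹) / 2) •
    (MvPolynomial.pderiv (i, j, false) + I • MvPolynomial.pderiv (i, j, true) +
      (MvPolynomial.pderiv (j, i, false) - I • MvPolynomial.pderiv (j, i, true)))

lemma gaussExpect_wignerPoly_mul (hN : N ≠ 0) (i j : Fin N)
    (p : MvPolynomial (Fin N × Fin N × Bool) ℂ) :
    gaussExpect N (wignerPoly N i j * p) =
      (Fintype.card (Fin N) : ℂ)⁻¹ * gaussExpect N (wignerDeriv i j p) := by
  have hN' : (N : ℂ) ≠ 0 := by exact_mod_cast hN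
  simp only [wignerPoly, of_apply, entryPoly, entryPolyConj, wignerDeriv, Fintype.card_fin,
    Derivation.smul_apply, Derivation.add_apply, Derivation.sub_apply, add_mul, sub_mul,
    smul_mul_assoc, map_smul, map_add, map_sub, gaussExpect_X_mul, smul_eq_mul]
  field_simp

lemma wignerDeriv_wignerPoly (hN : N ≠ 0) (i j k l : Fin N) :
    wignerDeriv i j (wignerPoly N k l) =
      (1 : Matrix (Fin N) (Fin N) (MvPolynomial (Fin N × Fin N × Bool) ℂ)) k j *
        (1 : Matrix (Fin N) (Fin N) (MvPolynomial (Fin N × Fin N × Bool) ℂ)) i l := by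
  have h2 : (√2 : ℂ) ^ 2 = 2 := by
    rw [← ofReal_pow, Real.sq_sqrt (by norm_num), ofReal_ofNat]
  have hsN : (√N : ℂ) ^ 2 = N := by
    rw [← ofReal_pow, Real.sq_sqrt (by positivity), ofReal_natCast]
  have hN' : (N : ℂ) ≠ 0 := by exact_mod_cast hN
  have hc : (N : ℂ) * ((√2 : ℂ)⁻¹ * (√N : ℂ)⁻¹) / 2 * ((√2 : ℂ)⁻¹ * (√N : ℂ)⁻¹) = 1 / 4 := by
    calc _ = (N : ℂ) / (2 * ((√2 : ℂ) ^ 2 * (√N : ℂ) ^ 2)) := by ring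
      _ = 1 / 4 := by rw [h2, hsN]; field_simp; norm_num
  simp only [wignerPoly, of_apply, entryPoly, entryPolyConj, wignerDeriv,
    Derivation.smul_apply, Derivation.add_apply, Derivation.sub_apply,
    Derivation.map_smul, map_add, map_sub, MvPolynomial.pderiv_X, Pi.single_apply, Prod.mk.injEq]
  have h1 : (1 : Matrix (Fin N) (Fin N) (MvPolynomial (Fin N × Fin N × Bool) ℂ)) k j *
      (1 : Matrix (Fin N) (Fin N) (MvPolynomial (Fin N × Fin N × Bool) ℂ)) i l =
      if k = j ∧ l = i then 1 else 0 := by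
    simp only [one_apply, mul_ite, mul_one, mul_zero, ite_and, eq_comm (a := i)]
    split_ifs <;> rfl
  rw [h1]
  simp only [and_true, Bool.false_eq_true, Bool.true_eq_false, and_false, if_false,
    smul_zero, add_zero, sub_zero, zero_add, zero_sub]
  simp only [and_comm (a := l = i), and_comm (a := l = j)]
  have hc' := congrArg (algebraMap ℂ (MvPolynomial (Fin N × Fin N × Bool) ℂ)) hc
  have hI := congrArg (algebraMap ℂ (MvPolynomial (Fin N × Fin N × Bool) ℂ)) I_mul_I
  have h4 : (algebraMap ℂ (MvPolynomial (Fin N × Fin N × Bool) ℂ)) (1 / 4) * 4 = 1 := by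
    rw [← map_ofNat (algebraMap ℂ (MvPolynomial (Fin N × Fin N × Bool) ℂ)), ← map_mul]
    norm_num
  rw [map_mul] at hc' hI
  rw [map_neg, map_one] at hI
  simp only [Algebra.smul_def]
  generalize algebraMap ℂ (MvPolynomial (Fin N × Fin N × Bool) ℂ) ((N : ℂ) * _ / 2) = c at *
  generalize algebraMap ℂ (MvPolynomial (Fin N × Fin N × Bool) ℂ) ((√2 : ℂ)⁻¹ * _) = d at *
  generalize algebraMap ℂ (MvPolynomial (Fin N × Fin N × Bool) ℂ) I = z at *
  generalize algebraMap ℂ (MvPolynomial (Fin N × Fin N × Bool) ℂ) (1 / 4) = q at *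
  generalize (if k = j ∧ l = i then (1 : MvPolynomial (Fin N × Fin N × Bool) ℂ) else 0) = a
  generalize (if k = i ∧ l = j then (1 : MvPolynomial (Fin N × Fin N × Bool) ℂ) else 0) = b
  linear_combination (2 * c * d * (b - a)) * hI + 4 * a * hc' + a * h4

lemma map_aeval_wignerPoly (ω : Fin N → Fin N → ℝ × ℝ) :
    (MvPolynomial.aeval (entryCoord ω)).mapMatrix (wignerPoly N) = wignerMatrix ω := by
  ext i j
  simp [wignerPoly, wignerMatrix, gaussMatrix, entryPoly, entryPolyConj, entryCoord]
  ring

lemma integral_trace_wignerMatrix_pow (k : ℕ) :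
    ∫ ω, (1 / (N : ℂ)) * ((wignerMatrix ω ^ k).trace) ∂(gaussMatrixMeasure N) =
      gaussExpect N (tracePowProd (wignerPoly N) [k]) := by
  simp only [gaussExpect, LinearMap.coe_mk, AddHom.coe_mk, tracePowProd, List.map_cons,
    List.map_nil, List.prod_singleton, map_smul, smul_eq_mul, Fintype.card_fin, one_div]
  simp only [← map_aeval_wignerPoly, ← map_pow]
  simp only [AlgHom.mapMatrix_apply, trace, diag_apply, map_apply, map_sum]
  exact integral_const_mul _ _

end GaussianPolynomials

/-- Wigner's semicircle law (Gaussian case, in moments): for every `k`, the expected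
normalized trace of `X_N^k` converges, as `N → ∞`, to the `k`-th moment of the standard
semicircle law, namely the Catalan number `C_{k/2}` if `k` is even and `0` if `k` is odd. -/
theorem wigner_semicircle_moments (k : ℕ) :
    Tendsto
      (fun N : ℕ => ∫ ω, (1 / (N : ℂ)) * ((wignerMatrix ω ^ k).trace)
          ∂(gaussMatrixMeasure N))
      atTop
      (nhds (if Even k then ((catalan (k / 2) : ℕ) : ℂ) else 0)) := by
  have h := tendsto_of_loop_equations
    (fun N l => gaussExpect N (tracePowProd (wignerPoly N) l))
    (fun N m p l => gaussExpect N (tracePowProd (wignerPoly N) p *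
      traceContraction (wignerPoly N) wignerDeriv m l)) ?_ ?_ ?_ ?_ ?_ ?_ [k]
  · simpa only [integral_trace_wignerMatrix_pow, List.map_cons, List.map_nil,
      List.prod_singleton, semicircleMoment] using h
  · intro N _
    simp [tracePowProd, gaussExpect_one]
  · intro N hN l
    have : NeZero N := ⟨hN⟩
    simp only [tracePowProd_zero_cons]
  · intro N hN l
    rw [tracePowProd_one_cons (gaussExpect_wignerPoly_mul hN)]
    simp [tracePowProd]
  · intro N hN m l
    rw [tracePowProd_add_two_cons (wignerDeriv_wignerPoly hN) (gaussExpect_wignerPoly_mul hN)]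
    simp [tracePowProd]
  · intro N _ m p
    simp [traceContraction_nil]
  · intro N hN m p j l
    simp only [traceContraction_cons (wignerDeriv_wignerPoly hN), tracePowProd_cons,
      tracePowProd_append, mul_add, map_add]
    rw [← smul_eq_mul (j : ℂ), ← map_smul]
    congr 2
    · simp only [mul_smul_comm]
      congr 1
      ring
    · ring
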